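/- arXiv:2309.01167 — 3 statements merged into one kernel-verified Lean document; each statement's English description precedes it below -/
import Mathlib

section
/- Let d ≥ 2 and let U be distributed according to the normalized Haar probability measure on U(d). For all index families i, j, i', j' : Fin 2 → Fin d, E[ u(i₁,j₁) u(i₂,j₂) conj(u(i'₁,j'₁)) conj(u(i'₂,j'₂)) ] = ∑_{α, β ∈ S₂} δ(i₁, i'_{α(1)}) δ(i₂, i'_{α(2)}) δ(j₁, j'_{β(1)}) δ(j₂, j'_{β(2)}) · w(α,β), where S₂ is the symmetric group on two elements and w(α,β) = 1/(d²−1) if α = β and w(α,β) = −1/(d(d²−1)) if α ≠ β. -/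
open MeasureTheory Matrix

noncomputable instance {d : ℕ} : MeasurableSpace (Matrix.unitaryGroup (Fin d) ℂ) := borel _
instance {d : ℕ} : BorelSpace (Matrix.unitaryGroup (Fin d) ℂ) := ⟨rfl⟩

/-!
The fourfold moments of `U` are the entries of the twirls `T = ∫ (U ⊗ U) A (U ⊗ U)⋆` of the matrix
units `A`. Invariance of the measure makes `T` commute with every `V ⊗ V`. Letting `V` run through
the diagonal phases, the permutation matrices and the square roots of transpositions forces
`T = x • 1 + y • S`, where `S` swaps the tensor factors. As `1` and `S` themselves commute with
every `U ⊗ U`, twirling preserves the traces of `A` and of `S A`, and these determine `x` and `y`.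
-/

open scoped Kronecker

section Twirl

variable {G A E : Type*} [Group G] [MeasurableSpace G] [CStarAlgebra A]
  [NormedAddCommGroup E] [NormedSpace ℂ E] [CompleteSpace E]

/-- The twirl of `a` along a unitary representation `ρ` of `G` in a C⋆-algebra: the average of the
conjugates of `a`. It is the junk value `0` when the integrand is not integrable, which happens for
finite `μ` only if the integrand is not measurable. -/
noncomputable def twirl (μ : Measure G) (ρ : G →* unitary A) (a : A) : A :=
  ∫ g, (ρ g : A) * a * star (ρ g : A) ∂μ

variable {μ : Measure G} {ρ : G →* unitary A}

lemma integrable_unitary_conj [IsFiniteMeasure μ]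
    (hρ : AEStronglyMeasurable (fun g ↦ (ρ g : A)) μ) (a : A) :
    Integrable (fun g ↦ (ρ g : A) * a * star (ρ g : A)) μ := by
  refine .of_bound ((hρ.mul_const a).mul (continuous_star.comp_aestronglyMeasurable hρ)) ‖a‖ ?_
  refine .of_forall fun g ↦ le_of_eq ?_
  rw [← Unitary.coe_star, CStarRing.norm_mul_coe_unitary, CStarRing.norm_coe_unitary_mul]

lemma commute_twirl [MeasurableMul G] [μ.IsMulLeftInvariant] [IsFiniteMeasure μ]
    (hρ : AEStronglyMeasurable (fun g ↦ (ρ g : A)) μ) (h : G) (a : A) :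
    Commute (ρ h : A) (twirl μ ρ a) := by
  have hint := integrable_unitary_conj hρ a
  calc (ρ h : A) * twirl μ ρ a
      = ∫ g, (ρ h : A) * ((ρ g : A) * a * star (ρ g : A)) ∂μ :=
        (integral_const_mul_of_integrable hint).symm
    _ = ∫ g, (ρ (h * g) : A) * a * star (ρ (h * g) : A) * (ρ h : A) ∂μ := by
        simp [mul_assoc]
    _ = ∫ g, (ρ g : A) * a * star (ρ g : A) * (ρ h : A) ∂μ :=
        integral_mul_left_eq_self (fun g ↦ (ρ g : A) * a * star (ρ g : A) * (ρ h : A)) h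
    _ = twirl μ ρ a * (ρ h : A) := integral_mul_const_of_integrable hint

lemma map_mul_twirl [IsProbabilityMeasure μ]
    (hρ : AEStronglyMeasurable (fun g ↦ (ρ g : A)) μ) (τ : A →L[ℂ] E)
    (hτ : ∀ x y, τ (x * y) = τ (y * x)) {b : A} (hb : ∀ g, Commute (ρ g : A) b) (a : A) :
    τ (b * twirl μ ρ a) = τ (b * a) := by
  have hint := integrable_unitary_conj hρ a
  have hconj (g : G) : τ (b * ((ρ g : A) * a * star (ρ g : A))) = τ (b * a) := by
    rw [mul_assoc, ← mul_assoc b, ← (hb g).eq, mul_assoc, hτ]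
    simp [mul_assoc]
  rw [twirl, ← integral_const_mul_of_integrable hint,
    ← τ.integral_comp_comm (hint.const_mul b)]
  simp [hconj]

end Twirl

lemma trace_single_one {m R : Type*} [Fintype m] [DecidableEq m] [NonAssocSemiring R] (p q : m) :
    trace (single p q (1 : R)) = (1 : Matrix m m R) p q := by
  rw [← one_mul (single p q 1), trace_mul_single, one_apply, one_apply]
  simp [eq_comm]

lemma kronecker_permMatrix {m n R : Type*} [DecidableEq m] [DecidableEq n] [NonAssocSemiring R]
    (σ : Equiv.Perm m) (τ : Equiv.Perm n) :
    σ.permMatrix R ⊗ₖ τ.permMatrix R = Equiv.Perm.permMatrix R (σ.prodCongr τ) := by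
  ext ⟨a, b⟩ ⟨c, e⟩
  simp [PEquiv.toMatrix_apply, Equiv.toPEquiv_apply, ← ite_and, and_comm]

section Unitaries

variable {n R : Type*} [Fintype n] [DecidableEq n]

lemma permMatrix_mem_unitaryGroup [CommRing R] [StarRing R] (σ : Equiv.Perm n) :
    σ.permMatrix R ∈ unitaryGroup n R := by
  rw [mem_unitaryGroup_iff, star_eq_conjTranspose, conjTranspose_permMatrix, ← permMatrix_mul,
    inv_mul_cancel, permMatrix_one]

lemma diagonal_mem_unitaryGroup [CommRing R] [StarRing R] {v : n → R}
    (hv : ∀ k, v k ∈ unitary R) : diagonal v ∈ unitaryGroup n R := by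
  rw [mem_unitaryGroup_iff, star_eq_conjTranspose, diagonal_conjTranspose, diagonal_mul_diagonal,
    ← diagonal_one]
  exact congrArg diagonal (funext fun k ↦ Unitary.mul_star_self_of_mem (hv k))

/-- The square root `(1 + i)/2 + (1 - i)/2 s` of an involution `s`. -/
noncomputable def involutionSqrt {A : Type*} [Ring A] [Algebra ℂ A] (s : A) : A :=
  ((1 + Complex.I) / 2) • (1 : A) + ((1 - Complex.I) / 2) • s

lemma involutionSqrt_mem_unitary {A : Type*} [Ring A] [StarRing A] [Algebra ℂ A] [StarModule ℂ A]
    {s : A} (hs : IsSelfAdjoint s) (hss : s * s = 1) : involutionSqrt s ∈ unitary A := by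
  have hstar : star (involutionSqrt s) =
      ((1 - Complex.I) / 2) • (1 : A) + ((1 + Complex.I) / 2) • s := by
    simp [involutionSqrt, hs.star_eq, ← sub_eq_add_neg]
  rw [Unitary.mem_iff, hstar, involutionSqrt]
  simp only [mul_add, add_mul, smul_mul_smul_comm, one_mul, mul_one, hss]
  constructor
  all_goals
    match_scalars
    all_goals ring_nf; norm_num [Complex.I_sq]

lemma apply_apply_of_commute_permMatrix [NonAssocSemiring R] {σ : Equiv.Perm n} {M : Matrix n n R}
    (h : Commute (σ.permMatrix R) M) (a b : n) : M (σ a) (σ b) = M a b := by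
  have := congrFun₂ h.eq a (σ b)
  simpa [PEquiv.toMatrix_toPEquiv_mul, PEquiv.mul_toMatrix_toPEquiv] using this

end Unitaries

section TensorSwap

variable {n R : Type*} [DecidableEq n]

variable (n R) in
/-- The matrix of the flip `x ⊗ y ↦ y ⊗ x` of `Rⁿ ⊗ Rⁿ`, in the basis indexed by `n × n`. -/
def tensorSwap [Zero R] [One R] : Matrix (n × n) (n × n) R :=
  Equiv.Perm.permMatrix R (Equiv.prodComm n n)

lemma tensorSwap_apply [Zero R] [One R] (p q : n × n) :
    tensorSwap n R p q = if p.swap = q then 1 else 0 := by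
  simp [tensorSwap, PEquiv.toMatrix_apply, Equiv.toPEquiv_apply]

variable [Fintype n]

lemma tensorSwap_mul_self [NonAssocSemiring R] : tensorSwap n R * tensorSwap n R = 1 := by
  rw [tensorSwap, ← permMatrix_mul, ← permMatrix_one]
  congr

lemma trace_tensorSwap [NonAssocSemiring R] : trace (tensorSwap n R) = Fintype.card n := by
  simp only [trace, diag, tensorSwap_apply, Fintype.sum_prod_type, Prod.swap_prod_mk, Prod.mk.injEq,
    eq_comm, and_self]
  simp

lemma trace_tensorSwap_mul_single [NonAssocSemiring R] (p q : n × n) :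
    trace (tensorSwap n R * single p q 1) = tensorSwap n R p q := by
  simp [trace_mul_single, tensorSwap_apply, Prod.swap_eq_iff_eq_swap, eq_comm (a := q)]

lemma commute_kronecker_self_tensorSwap [CommSemiring R] (M : Matrix n n R) :
    Commute (M ⊗ₖ M) (tensorSwap n R) := by
  ext ⟨a, b⟩ ⟨c, e⟩
  simp [tensorSwap, PEquiv.toMatrix_toPEquiv_mul, PEquiv.mul_toMatrix_toPEquiv, mul_comm]

end TensorSwap

section Commutant

variable {n : Type*} [Fintype n] [DecidableEq n] {T : Matrix (n × n) (n × n) ℂ}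

/-- `T` lies in the commutant of the representation `V ↦ V ⊗ V` of the unitary group. -/
def CommutesWithTensorSquares (T : Matrix (n × n) (n × n) ℂ) : Prop :=
  ∀ V ∈ unitaryGroup n ℂ, Commute (V ⊗ₖ V) T

namespace CommutesWithTensorSquares

lemma apply_perm (hT : CommutesWithTensorSquares T) (σ : Equiv.Perm n) (a b c e : n) :
    T (σ a, σ b) (σ c, σ e) = T (a, b) (c, e) := by
  have h := hT _ (permMatrix_mem_unitaryGroup σ)
  rw [kronecker_permMatrix] at h
  exact apply_apply_of_commute_permMatrix h (a, b) (c, e)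

lemma phase_mul_eq (hT : CommutesWithTensorSquares T) {v : n → ℂ} (hv : ∀ k, v k ∈ unitary ℂ)
    {p q : n × n} (hpq : T p q ≠ 0) : v p.1 * v p.2 = v q.1 * v q.2 := by
  have h := congrFun₂ (hT _ (diagonal_mem_unitaryGroup hv)).eq p q
  rw [diagonal_kronecker_diagonal, diagonal_mul, mul_diagonal, mul_comm (T p q)] at h
  exact mul_right_cancel₀ hpq h

lemma eq_or_eq_swap_of_apply_ne_zero (hT : CommutesWithTensorSquares T) {p q : n × n}
    (hpq : T p q ≠ 0) : p = q ∨ p = q.swap := by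
  -- As `1`, `I`, `I * I` are distinct, the phase `I` at `k` counts how often `k` occurs in a pair.
  have hphase (k : n) : (if p.1 = k then Complex.I else 1) * (if p.2 = k then Complex.I else 1) =
      (if q.1 = k then Complex.I else 1) * (if q.2 = k then Complex.I else 1) := by
    refine hT.phase_mul_eq (v := fun l ↦ if l = k then Complex.I else 1) (fun l ↦ ?_) hpq
    split_ifs <;> simp [Unitary.mem_iff]
  have hI_ne_one : Complex.I ≠ 1 := by simp [Complex.ext_iff]
  have hI_mul_I : Complex.I * Complex.I = -1 := Complex.I_mul_I
  grind [hphase p.1, hphase p.2, Prod.ext_iff, Prod.swap]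

lemma kronecker_mul_apply (hT : CommutesWithTensorSquares T) (M : Matrix n n ℂ) {p q : n}
    (hpq : p ≠ q) (x : n × n) :
    ((M ⊗ₖ M) * T) x (p, q) =
      M x.1 p * M x.2 q * T (p, q) (p, q) + M x.1 q * M x.2 p * T (q, p) (p, q) := by
  rw [mul_apply, Fintype.sum_eq_add (p, q) (q, p) (by simp [hpq])]
  · rfl
  · rintro y ⟨hy, hy'⟩
    refine mul_eq_zero_of_right _ (of_not_not fun hne ↦ ?_)
    exact (hT.eq_or_eq_swap_of_apply_ne_zero hne).elim hy hy'

lemma mul_kronecker_apply (hT : CommutesWithTensorSquares T) (M : Matrix n n ℂ) (p : n)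
    (y : n × n) :
    (T * (M ⊗ₖ M)) (p, p) y = T (p, p) (p, p) * (M p y.1 * M p y.2) := by
  rw [mul_apply, Fintype.sum_eq_single (p, p)]
  · rfl
  · intro x hx
    refine mul_eq_zero_of_left (of_not_not fun hne ↦ ?_) _
    obtain h | h := hT.eq_or_eq_swap_of_apply_ne_zero hne
    · exact hx h.symm
    · exact hx (Prod.swap_injective h.symm)

lemma apply_self_self (hT : CommutesWithTensorSquares T) {p q : n} (hpq : p ≠ q) :
    T (p, p) (p, p) = T (p, q) (p, q) + T (q, p) (p, q) := by
  let V : Matrix n n ℂ := involutionSqrt ((Equiv.swap p q).permMatrix ℂ)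
  have hV : V ∈ unitaryGroup n ℂ := by
    refine involutionSqrt_mem_unitary ?_ ?_
    · simp [IsSelfAdjoint, star_eq_conjTranspose]
    · rw [← permMatrix_mul, Equiv.swap_mul_self, permMatrix_one]
  have hV_pp : V p p ≠ 0 := by
    simp [V, involutionSqrt, hpq.symm, Complex.ext_iff]
  have hV_pq : V p q ≠ 0 := by
    simp [V, involutionSqrt, hpq, Complex.ext_iff]
  have h := congrFun₂ (hT V hV).eq (p, p) (p, q)
  rw [hT.kronecker_mul_apply V hpq, hT.mul_kronecker_apply V] at h
  refine mul_left_cancel₀ (mul_ne_zero hV_pp hV_pq) ?_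
  linear_combination -h

lemma eq_smul_one_add_smul_tensorSwap (hT : CommutesWithTensorSquares T) {p q : n}
    (hpq : p ≠ q) :
    T = T (p, q) (p, q) • 1 + T (q, p) (p, q) • tensorSwap n ℂ := by
  have hperm {a b : n} (hab : a ≠ b) : ∃ σ : Equiv.Perm n, σ p = a ∧ σ q = b :=
    MulAction.is_two_pretransitive_iff.1 (Equiv.Perm.isMultiplyPretransitive n 2) hpq hab
  have hdiag (a b : n) : T (a, b) (a, b) =
      T (p, q) (p, q) + if a = b then T (q, p) (p, q) else 0 := by
    split_ifs with hab
    · rw [← hT.apply_self_self hpq, ← hab, ← hT.apply_perm (Equiv.swap a p)]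
      simp
    · obtain ⟨σ, rfl, rfl⟩ := hperm hab
      simp [hT.apply_perm]
  have hswap {a b : n} (hab : a ≠ b) : T (a, b) (b, a) = T (q, p) (p, q) := by
    obtain ⟨σ, rfl, rfl⟩ := hperm hab.symm
    rw [hT.apply_perm]
  ext ⟨a, b⟩ x
  simp only [Matrix.add_apply, Matrix.smul_apply, one_apply, tensorSwap_apply,
    Prod.swap_prod_mk, smul_eq_mul]
  by_cases hx : (a, b) = x
  · subst hx
    rw [hdiag]
    simp [eq_comm]
  by_cases hx' : (b, a) = x
  · subst hx'
    simp [hx, hswap (a := a) (b := b) (by grind)]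
  · have hzero : T (a, b) x = 0 := by
      by_contra hne
      grind [hT.eq_or_eq_swap_of_apply_ne_zero hne]
    simp [hx, hx', hzero]

end CommutesWithTensorSquares

end Commutant

lemma natCast_sq_sub_one_ne_zero {K : Type*} [Ring K] [CharZero K] {d : ℕ} (hd : 1 < d) :
    (d : K) ^ 2 - 1 ≠ 0 :=
  sub_ne_zero.2 (mod_cast (Nat.one_lt_pow two_ne_zero hd).ne')

section TensorSquare

variable {n : Type*} [Fintype n] [DecidableEq n]

/-- The representation `U ↦ U ⊗ U` of the unitary group on `Rⁿ ⊗ Rⁿ`. -/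
def tensorSquare {R : Type*} [CommRing R] [StarRing R] :
    unitaryGroup n R →* unitary (Matrix (n × n) (n × n) R) where
  toFun U := ⟨U ⊗ₖ U, kronecker_mem_unitary U.2 U.2⟩
  map_one' := Subtype.ext one_kronecker_one
  map_mul' U V := Subtype.ext (mul_kronecker_mul U.1 V.1 U.1 V.1)

open scoped Matrix.Norms.L2Operator

variable [MeasurableSpace (unitaryGroup n ℂ)] [BorelSpace (unitaryGroup n ℂ)]
  (μ : Measure (unitaryGroup n ℂ))

lemma aestronglyMeasurable_tensorSquare :
    AEStronglyMeasurable (fun U : unitaryGroup n ℂ ↦ (tensorSquare U).1) μ := by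
  have hentry (i j : n) : Continuous fun U : unitaryGroup n ℂ ↦ (U : Matrix n n ℂ) i j :=
    continuous_subtype_val.matrix_elem i j
  refine Continuous.aestronglyMeasurable (continuous_matrix fun p q ↦ ?_)
  exact (hentry _ _).mul (hentry _ _)

lemma twirl_tensorSquare_apply [IsFiniteMeasure μ] (A : Matrix (n × n) (n × n) ℂ) (p q : n × n) :
    twirl μ tensorSquare A p q =
      ∫ U, ((tensorSquare U).1 * A * star (tensorSquare U).1) p q ∂μ :=
  ((entryLinearMap ℂ ℂ p q).toContinuousLinearMap.integral_comp_comm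
    (integrable_unitary_conj (aestronglyMeasurable_tensorSquare μ) A)).symm

lemma commutesWithTensorSquares_twirl [μ.IsMulLeftInvariant] [IsFiniteMeasure μ]
    (A : Matrix (n × n) (n × n) ℂ) :
    CommutesWithTensorSquares (twirl μ tensorSquare A) :=
  fun V hV ↦ commute_twirl (aestronglyMeasurable_tensorSquare μ) (⟨V, hV⟩ : unitaryGroup n ℂ) A

lemma trace_mul_twirl_tensorSquare [IsProbabilityMeasure μ] {B : Matrix (n × n) (n × n) ℂ}
    (hB : CommutesWithTensorSquares B) (A : Matrix (n × n) (n × n) ℂ) :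
    trace (B * twirl μ tensorSquare A) = trace (B * A) :=
  map_mul_twirl (aestronglyMeasurable_tensorSquare μ)
    (traceLinearMap (n × n) ℂ ℂ).toContinuousLinearMap trace_mul_comm (fun U ↦ hB U U.2) A

theorem twirl_tensorSquare [Nontrivial n] [μ.IsMulLeftInvariant] [IsProbabilityMeasure μ]
    (A : Matrix (n × n) (n × n) ℂ) :
    let d : ℂ := Fintype.card n
    let S := tensorSwap n ℂ
    twirl μ tensorSquare A =
      (trace A / (d ^ 2 - 1) - trace (S * A) / (d * (d ^ 2 - 1))) • 1 +
      (trace (S * A) / (d ^ 2 - 1) - trace A / (d * (d ^ 2 - 1))) • S := by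
  intro d S
  obtain ⟨p, q, hpq⟩ := exists_pair_ne n
  obtain ⟨x, y, hxy⟩ : ∃ x y : ℂ, twirl μ tensorSquare A = x • 1 + y • S :=
    ⟨_, _, (commutesWithTensorSquares_twirl μ A).eq_smul_one_add_smul_tensorSwap hpq⟩
  have htrace : d ^ 2 * x + d * y = trace A := by
    have h := trace_mul_twirl_tensorSquare μ (B := 1) (fun V _ ↦ .one_right _) A
    simp only [one_mul, hxy, trace_add, trace_smul, trace_one, S, trace_tensorSwap,
      Fintype.card_prod, Nat.cast_mul, smul_eq_mul] at h
    linear_combination h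
  have htrace_swap : d * x + d ^ 2 * y = trace (S * A) := by
    have h := trace_mul_twirl_tensorSquare μ (B := S)
      (fun V _ ↦ commute_kronecker_self_tensorSwap V) A
    simp only [hxy, mul_add, mul_smul_comm, mul_one, S, tensorSwap_mul_self, trace_add, trace_smul,
      trace_one, trace_tensorSwap, Fintype.card_prod, Nat.cast_mul, smul_eq_mul] at h
    linear_combination h
  have hd : d ≠ 0 := Nat.cast_ne_zero.2 Fintype.card_ne_zero
  have hd' : d ^ 2 - 1 ≠ 0 := natCast_sq_sub_one_ne_zero Fintype.one_lt_card
  rw [hxy, ← htrace, ← htrace_swap]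
  congr 2 <;> field_simp <;> ring

lemma twirl_tensorSquare_single_apply [IsFiniteMeasure μ] (p q r s : n × n) :
    twirl μ tensorSquare (single r s 1) p q =
      ∫ U : unitaryGroup n ℂ, (U.1 p.1 r.1 * U.1 p.2 r.2) *
        (starRingEnd ℂ (U.1 q.1 s.1) * starRingEnd ℂ (U.1 q.2 s.2)) ∂μ := by
  rw [twirl_tensorSquare_apply]
  simp [tensorSquare, mul_apply, single_apply, ite_and]

end TensorSquare

lemma sum_perm_fin_two {M : Type*} [AddCommMonoid M] (f : Equiv.Perm (Fin 2) → M) :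
    ∑ σ, f σ = f 1 + f (Equiv.swap 0 1) := by
  rw [show (Finset.univ : Finset (Equiv.Perm (Fin 2))) = {1, Equiv.swap 0 1} by decide,
    Finset.sum_pair (by decide)]

section PermFinTwo

variable {n R : Type*} [DecidableEq n] [CommSemiring R] (x y : Fin 2 → n)

lemma prod_ite_eq_one_perm :
    (∏ ℓ, if x ℓ = y ((1 : Equiv.Perm (Fin 2)) ℓ) then (1 : R) else 0) =
      (1 : Matrix (n × n) (n × n) R) (x 0, x 1) (y 0, y 1) := by
  change (∏ ℓ, if x ℓ = y ℓ then (1 : R) else 0) = _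
  simp [Fin.prod_univ_two, one_apply, ← ite_and, and_comm]

lemma prod_ite_eq_swap_perm :
    (∏ ℓ, if x ℓ = y (Equiv.swap 0 1 ℓ) then (1 : R) else 0) =
      tensorSwap n R (x 0, x 1) (y 0, y 1) := by
  simp [Fin.prod_univ_two, tensorSwap_apply, ite_and]

end PermFinTwo

theorem unitary_haar_second_moment_general {n : Type*} [Fintype n] [DecidableEq n] [Nontrivial n]
    [MeasurableSpace (unitaryGroup n ℂ)] [BorelSpace (unitaryGroup n ℂ)]
    (μ : Measure (unitaryGroup n ℂ)) [μ.IsMulLeftInvariant] [IsProbabilityMeasure μ]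
    (i j i' j' : Fin 2 → n) :
    ∫ U : unitaryGroup n ℂ, (∏ ℓ, (U : Matrix n n ℂ) (i ℓ) (j ℓ)) *
        (∏ ℓ, (starRingEnd ℂ) ((U : Matrix n n ℂ) (i' ℓ) (j' ℓ))) ∂μ
      = ∑ α : Equiv.Perm (Fin 2), ∑ β : Equiv.Perm (Fin 2),
          (∏ ℓ, if i ℓ = i' (α ℓ) then (1 : ℂ) else 0) *
          (∏ ℓ, if j ℓ = j' (β ℓ) then (1 : ℂ) else 0) *
          (if α = β then 1 / ((Fintype.card n : ℂ) ^ 2 - 1)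
            else -1 / ((Fintype.card n : ℂ) * ((Fintype.card n : ℂ) ^ 2 - 1))) := by
  have hne : (1 : Equiv.Perm (Fin 2)) ≠ Equiv.swap 0 1 := by decide
  have hmoment := twirl_tensorSquare_single_apply μ (i 0, i 1) (i' 0, i' 1) (j 0, j 1) (j' 0, j' 1)
  rw [twirl_tensorSquare, trace_single_one, trace_tensorSwap_mul_single] at hmoment
  simp only [sum_perm_fin_two, prod_ite_eq_one_perm, prod_ite_eq_swap_perm, if_pos, if_neg hne,
    if_neg hne.symm]
  simp only [Fin.prod_univ_two, ← hmoment, Matrix.add_apply, Matrix.smul_apply, smul_eq_mul]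
  ring

/-- Second-order Weingarten formula for the unitary group. The weight is
`Wg(d,(1,1)) = 1/(d²−1)` on the diagonal `α = β` and `Wg(d,(2)) = −1/(d(d²−1))` off it. -/
theorem unitary_haar_second_moment {d : ℕ} (hd : 2 ≤ d)
    (μ : Measure (Matrix.unitaryGroup (Fin d) ℂ)) [μ.IsHaarMeasure] [IsProbabilityMeasure μ]
    (i j i' j' : Fin 2 → Fin d) :
    ∫ U : Matrix.unitaryGroup (Fin d) ℂ,
        (∏ ℓ, (U : Matrix (Fin d) (Fin d) ℂ) (i ℓ) (j ℓ)) *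
        (∏ ℓ, (starRingEnd ℂ) ((U : Matrix (Fin d) (Fin d) ℂ) (i' ℓ) (j' ℓ))) ∂μ
      = ∑ α : Equiv.Perm (Fin 2), ∑ β : Equiv.Perm (Fin 2),
          (∏ ℓ, if i ℓ = i' (α ℓ) then (1 : ℂ) else 0) *
          (∏ ℓ, if j ℓ = j' (β ℓ) then (1 : ℂ) else 0) *
          (if α = β then 1 / ((d : ℂ) ^ 2 - 1) else -1 / ((d : ℂ) * ((d : ℂ) ^ 2 - 1))) := by
  have : Nontrivial (Fin d) := Fin.nontrivial_iff_two_le.2 hd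
  simpa only [Fintype.card_fin] using unitary_haar_second_moment_general μ i j i' j'
end

section
/- Let d ≥ 2 and let M be distributed according to the normalized Haar probability measure on O(d). Let P₄ = { {{1,2},{3,4}}, {{1,3},{2,4}}, {{1,4},{2,3}} } denote the three pairings of {1,2,3,4}. For all index families i, j : Fin 4 → Fin d, E[ m(i₁,j₁) m(i₂,j₂) m(i₃,j₃) m(i₄,j₄) ] = ∑_{p, q ∈ P₄} Δ_p(i) Δ_q(j) · w(p,q), where Δ_p(i) = ∏_{{a,b} ∈ p} δ(i_a, i_b), and w(p,q) = (d+1)/(d(d−1)(d+2)) if p = q and w(p,q) = −1/(d(d−1)(d+2)) if p ≠ q. -/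
/-! The moment `E[∏ ⟪v l, M e_{j l}⟫]` is a four-linear form in `v` which, by invariance of the
measure, is invariant under all linear isometries. Such an isotropic form `F` is determined by its
values `c p` on the words `x x y y`, `x y x y`, `x y y x` (one for each pairing `p`) in orthogonal
unit vectors `x`, `y`: the reflection negating one basis vector kills every word in which that
vector has odd multiplicity, and comparing `F` at `x + y` with `F` at `√2 • x` gives
`F(x,x,x,x) = ∑ c p`. Hence `F(e_i) = ∑ Δ_p(i) c p`.

Contracting `F` along a pairing `q` gives `Δ_q(j)`, since the columns of `M` are orthonormal; in
terms of `c` this reads `d(d-1) c q + d ∑ c p = Δ_q(j)`, a system whose inverse is the Weingarten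
matrix. -/

open MeasureTheory Matrix

noncomputable instance {d : ℕ} : MeasurableSpace (Matrix.orthogonalGroup (Fin d) ℝ) := borel _
instance {d : ℕ} : BorelSpace (Matrix.orthogonalGroup (Fin d) ℝ) := ⟨rfl⟩

/-- The pairings of `{1,2,3,4}`, encoded as the fixed-point-free involutions of `Fin 4`. -/
def pairings4 : Finset (Equiv.Perm (Fin 4)) :=
  Finset.univ.filter fun σ => σ * σ = 1 ∧ ∀ x, σ x ≠ x

section Pairings

variable {α β : Type*}

/-- The indicator `Δ_p(i)` that the index family `i` is constant on the orbits of `p`; for a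
fixed-point-free involution `p` these orbits are the blocks of the corresponding pairing. -/
noncomputable def pairingDelta {ι : Type*} [Fintype ι] [DecidableEq α] (p : Equiv.Perm ι)
    (i : ι → α) : ℝ :=
  ∏ x, if i x = i (p x) then 1 else 0

/-- The word of length four with the letter `x` on the block of `0` in the pairing `p` and the
letter `y` on the other block. -/
def blockWord (p : Equiv.Perm (Fin 4)) (x y : α) : Fin 4 → α :=
  fun l => if l = 0 ∨ l = p 0 then x else y

lemma blockWord_self (p : Equiv.Perm (Fin 4)) (x : α) : blockWord p x x = fun _ => x :=
  funext fun _ => ite_self x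

lemma comp_blockWord (f : α → β) (p : Equiv.Perm (Fin 4)) (x y : α) :
    f ∘ blockWord p x y = blockWord p (f x) (f y) :=
  funext fun _ => apply_ite f _ x y

lemma piecewise_eq_blockWord (p : Equiv.Perm (Fin 4)) (x y : α) :
    ({0, p 0} : Finset (Fin 4)).piecewise (fun _ => x) (fun _ => y) = blockWord p x y := by
  ext l
  simp [Finset.piecewise, blockWord]

lemma mem_block_iff_mem_block {p : Equiv.Perm (Fin 4)} (hp : p ∈ pairings4) (l m : Fin 4) :
    (l = 0 ∨ l = p 0 ↔ m = 0 ∨ m = p 0) ↔ m = l ∨ m = p l := by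
  revert p l m
  decide

lemma exists_notMem_block (p : Equiv.Perm (Fin 4)) : ∃ k, ¬(k = 0 ∨ k = p 0) := by
  revert p
  decide

lemma injOn_apply_zero_pairings4 :
    Set.InjOn (fun p : Equiv.Perm (Fin 4) => p 0) pairings4 := by
  have : ∀ p ∈ pairings4, ∀ q ∈ pairings4, p 0 = q 0 → p = q := by decide
  exact fun p hp q hq => this p hp q hq

lemma forall_eq_apply_pairing_iff {p : Equiv.Perm (Fin 4)} (hp : p ∈ pairings4)
    (i : Fin 4 → α) : (∀ l, i l = i (p l)) ↔ ∃ x y, i = blockWord p x y := by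
  constructor
  · intro h
    obtain ⟨k, hk⟩ := exists_notMem_block p
    refine ⟨i 0, i k, funext fun l => ?_⟩
    by_cases hl : l = 0 ∨ l = p 0
    · rw [blockWord, if_pos hl]
      rcases hl with rfl | rfl
      exacts [rfl, (h 0).symm]
    · rw [blockWord, if_neg hl]
      rcases (mem_block_iff_mem_block hp l k).1 (iff_of_false hl hk) with rfl | rfl
      exacts [rfl, h l]
  · rintro ⟨x, y, rfl⟩ l
    exact if_congr ((mem_block_iff_mem_block hp l (p l)).2 (.inr rfl)) rfl rfl

lemma forall_blockWord_eq_apply_pairing_iff {p q : Equiv.Perm (Fin 4)} (hp : p ∈ pairings4)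
    (hq : q ∈ pairings4) (x y : α) :
    (∀ l, blockWord q x y l = blockWord q x y (p l)) ↔ p = q ∨ x = y := by
  constructor
  · intro h
    refine or_iff_not_imp_left.2 fun hpq => ?_
    have hp0 : p 0 ≠ 0 := (Finset.mem_filter.1 hp).2.2 0
    have hpq0 : p 0 ≠ q 0 := fun h0 => hpq (injOn_apply_zero_pairings4 hp hq h0)
    simpa [blockWord, hp0, hpq0] using h 0
  · rintro (rfl | rfl)
    · exact (forall_eq_apply_pairing_iff hp _).2 ⟨x, y, rfl⟩
    · simp [blockWord_self]

lemma exists_pairing_of_even_card_fiber [DecidableEq α] {i : Fin 4 → α}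
    (heven : ∀ x, Even (Finset.univ.filter fun l => i l = x).card) :
    ∃ p ∈ pairings4, ∀ l, i l = i (p l) := by
  have hmatch : (i 0 = i 1 ∧ i 2 = i 3) ∨ (i 0 = i 2 ∧ i 1 = i 3) ∨ (i 0 = i 3 ∧ i 1 = i 2) := by
    simp only [Finset.card_filter, Fin.sum_univ_four] at heven
    have h0 := heven (i 0)
    have h1 := heven (i 1)
    have h2 := heven (i 2)
    grind
  rcases hmatch with ⟨h, h'⟩ | ⟨h, h'⟩ | ⟨h, h'⟩
  · exact ⟨Equiv.swap 0 1 * Equiv.swap 2 3, by decide,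
      by simp [Fin.forall_fin_succ, Equiv.swap_apply_def, h, h']⟩
  · exact ⟨Equiv.swap 0 2 * Equiv.swap 1 3, by decide,
      by simp [Fin.forall_fin_succ, Equiv.swap_apply_def, h, h']⟩
  · exact ⟨Equiv.swap 0 3 * Equiv.swap 1 2, by decide,
      by simp [Fin.forall_fin_succ, Equiv.swap_apply_def, h, h']⟩

lemma prod_eq_mul_of_notMem_block {R : Type*} [CommMonoid R] {p : Equiv.Perm (Fin 4)}
    (hp : p ∈ pairings4) {k : Fin 4} (hk : ¬(k = 0 ∨ k = p 0)) (f : Fin 4 → R) :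
    ∏ l, f l = f 0 * f (p 0) * (f k * f (p k)) := by
  obtain ⟨huniv, h0, hp0, hpk⟩ : (Finset.univ : Finset (Fin 4)) = {0, p 0, k, p k} ∧
      0 ∉ ({p 0, k, p k} : Finset (Fin 4)) ∧ p 0 ∉ ({k, p k} : Finset (Fin 4)) ∧ k ≠ p k := by
    revert p k
    decide
  rw [huniv, Finset.prod_insert h0, Finset.prod_insert hp0, Finset.prod_pair hpk, mul_assoc]

lemma sum_even_card_eq_sum_pairings4 {G : Type*} [AddCommMonoid G] (f : Finset (Fin 4) → G) :
    ∑ s with Even s.card, f s =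
      f ∅ + f Finset.univ + ∑ p ∈ pairings4, (f {0, p 0} + f {0, p 0}ᶜ) := by
  have hunion : (Finset.univ.filter fun s : Finset (Fin 4) => Even s.card) =
      {∅, Finset.univ} ∪ (pairings4.image (fun p => {0, p 0}) ∪
        pairings4.image fun p => {0, p 0}ᶜ) := by decide
  have hinj : ∀ p ∈ pairings4, ∀ q ∈ pairings4, ({0, p 0} : Finset (Fin 4)) = {0, q 0} → p = q := by
    decide
  rw [hunion, Finset.sum_union (by decide), Finset.sum_union (by decide),
    Finset.sum_pair (by decide), Finset.sum_image fun p hp q hq => hinj p hp q hq,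
    Finset.sum_image fun p hp q hq h => hinj p hp q hq (compl_injective h),
    Finset.sum_add_distrib]

lemma pairingDelta_eq_ite {ι : Type*} [Fintype ι] [DecidableEq α] (p : Equiv.Perm ι) (i : ι → α)
    [Decidable (∀ l, i l = i (p l))] :
    pairingDelta p i = if ∀ l, i l = i (p l) then 1 else 0 := by
  rw [pairingDelta, Fintype.prod_boole]
  congr

lemma pairingDelta_blockWord [DecidableEq α] {p q : Equiv.Perm (Fin 4)} (hp : p ∈ pairings4)
    (hq : q ∈ pairings4) (x y : α) :
    pairingDelta p (blockWord q x y) = if p = q ∨ x = y then 1 else 0 := by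
  simp only [pairingDelta_eq_ite, forall_blockWord_eq_apply_pairing_iff hp hq]

end Pairings

/-- A multilinear map on a real inner product space is isotropic when it is invariant under the
simultaneous action of every linear isometry on its arguments. -/
def IsIsotropic {ι E G : Type*} [NormedAddCommGroup E] [InnerProductSpace ℝ E] [AddCommGroup G]
    [Module ℝ G] (F : MultilinearMap ℝ (fun _ : ι => E) G) : Prop :=
  ∀ (g : E ≃ₗᵢ[ℝ] E) (v : ι → E), F (g ∘ v) = F v

namespace IsIsotropic

variable {ι n E G : Type*} [NormedAddCommGroup E] [InnerProductSpace ℝ E] [AddCommGroup G]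
  [Module ℝ G]

lemma map_const_eq {F : MultilinearMap ℝ (fun _ : ι => E) G} (hF : IsIsotropic F) {x y : E}
    (hxy : ‖x‖ = ‖y‖) : F (fun _ => x) = F fun _ => y := by
  rw [← hF (ℝ ∙ (x - y))ᗮ.reflection, Function.comp_def, Submodule.reflection_sub hxy]

lemma map_blockWord_swap {F : MultilinearMap ℝ (fun _ : Fin 4 => E) G} (hF : IsIsotropic F)
    {x y : E} (hxy : ‖x‖ = ‖y‖) (p : Equiv.Perm (Fin 4)) :
    F (blockWord p y x) = F (blockWord p x y) := by
  have hx : (ℝ ∙ (x - y))ᗮ.reflection x = y := Submodule.reflection_sub hxy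
  have hy : (ℝ ∙ (x - y))ᗮ.reflection y = x := by
    simpa only [hx] using Submodule.reflection_reflection (ℝ ∙ (x - y))ᗮ x
  rw [← hF (ℝ ∙ (x - y))ᗮ.reflection (blockWord p x y), comp_blockWord, hx, hy]

lemma map_eq_zero_of_odd {F : MultilinearMap ℝ (fun _ : ι => E) G}
    (hF : IsIsotropic F) {x : E} {v : ι → E} {s : Finset ι} (hs : Odd s.card)
    (hin : ∀ l ∈ s, v l = x) (hout : ∀ l ∉ s, inner ℝ x (v l) = 0) : F v = 0 := by
  classical
  have hflip : (ℝ ∙ x)ᗮ.reflection ∘ v = s.piecewise (fun l => (-1 : ℝ) • v l) v := by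
    ext l
    by_cases hl : l ∈ s
    · simp [hl, hin l hl, Submodule.reflection_orthogonalComplement_singleton_eq_neg]
    · have : v l ∈ (ℝ ∙ x)ᗮ := Submodule.mem_orthogonal_singleton_iff_inner_right.2 (hout l hl)
      simp [hl, Submodule.reflection_mem_subspace_eq_self this]
  have hneg : F v = -F v :=
    calc F v = F ((ℝ ∙ x)ᗮ.reflection ∘ v) := (hF _ v).symm
      _ = -F v := by
        rw [hflip, F.map_piecewise_smul, Finset.prod_const, hs.neg_one_pow, neg_one_smul]
  linear_combination (norm := module) (1 / 2 : ℝ) • hneg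

lemma sum_map_piecewise [Fintype ι] [DecidableEq ι] {F : MultilinearMap ℝ (fun _ : ι => E) G}
    (hF : IsIsotropic F) {x y : E} (hxy : ‖x‖ = ‖y‖) (horth : inner ℝ x y = 0) :
    ∑ s : Finset ι, F (s.piecewise (fun _ => x) fun _ => y) =
      √2 ^ Fintype.card ι • F fun _ => x := by
  have hnorm : ‖x + y‖ = ‖√2 • x‖ := by
    rw [← sq_eq_sq₀ (norm_nonneg _) (norm_nonneg _), norm_add_sq_real, horth, norm_smul, mul_pow,
      ← hxy, Real.norm_of_nonneg (Real.sqrt_nonneg 2), Real.sq_sqrt zero_le_two]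
    ring
  calc ∑ s : Finset ι, F (s.piecewise (fun _ => x) fun _ => y)
      = F (fun _ => x + y) := (F.map_add_univ (fun _ => x) fun _ => y).symm
    _ = F (fun _ => √2 • x) := hF.map_const_eq hnorm
    _ = √2 ^ Fintype.card ι • F fun _ => x := by
      rw [F.map_smul_univ, Finset.prod_const, Finset.card_univ]

lemma map_const_eq_sum_blockWord {F : MultilinearMap ℝ (fun _ : Fin 4 => E) G}
    (hF : IsIsotropic F) {x y : E} (hxy : ‖x‖ = ‖y‖) (horth : inner ℝ x y = 0) :
    F (fun _ => x) = ∑ p ∈ pairings4, F (blockWord p x y) := by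
  set f : Finset (Fin 4) → G := fun s => F (s.piecewise (fun _ => x) fun _ => y) with hf
  have hodd : ∀ s : Finset (Fin 4), ¬Even s.card → f s = 0 := fun s hs =>
    hF.map_eq_zero_of_odd (Nat.not_even_iff_odd.1 hs)
      (fun l hl => s.piecewise_eq_of_mem _ _ hl)
      fun l hl => by rwa [s.piecewise_eq_of_notMem _ _ hl]
  have hempty : f ∅ = F fun _ => x := by
    simpa [hf] using hF.map_const_eq hxy.symm
  have hblock : ∀ p : Equiv.Perm (Fin 4), f {0, p 0} = F (blockWord p x y) := fun p => by
    simp only [hf, piecewise_eq_blockWord]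
  have hcompl : ∀ p : Equiv.Perm (Fin 4), f {0, p 0}ᶜ = F (blockWord p x y) := fun p => by
    rw [← hF.map_blockWord_swap hxy]
    simp only [hf, Finset.piecewise_compl, piecewise_eq_blockWord]
  have hsum : ∑ s with Even s.card, f s = (4 : ℝ) • F fun _ => x := by
    rw [Finset.sum_filter_of_ne fun s _ hs => not_imp_comm.1 (hodd s) hs,
      hF.sum_map_piecewise hxy horth, Fintype.card_fin]
    congr 1
    rw [show 4 = 2 * 2 from rfl, pow_mul, Real.sq_sqrt zero_le_two]
    norm_num
  have huniv : f Finset.univ = F fun _ => x := by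
    simp [hf]
  rw [sum_even_card_eq_sum_pairings4, hempty, huniv] at hsum
  simp only [hblock, hcompl, Finset.sum_add_distrib] at hsum
  linear_combination (norm := module) (-1 / 2 : ℝ) • hsum

lemma map_basis_comp_perm [Fintype n] {F : MultilinearMap ℝ (fun _ : ι => E) G}
    (hF : IsIsotropic F) (b : OrthonormalBasis n ℝ E) (σ : Equiv.Perm n) (i : ι → n) :
    F (b ∘ σ ∘ i) = F (b ∘ i) := by
  rw [← hF (b.equiv b σ) (b ∘ i)]
  congr 1
  ext l
  simp

lemma map_basis_blockWord [Fintype n] {F : MultilinearMap ℝ (fun _ : Fin 4 => E) G}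
    (hF : IsIsotropic F) (b : OrthonormalBasis n ℝ E) {x y u v : n} (hxy : x ≠ y) (huv : u ≠ v)
    (p : Equiv.Perm (Fin 4)) :
    F (b ∘ blockWord p x y) = F (b ∘ blockWord p u v) := by
  obtain ⟨σ, rfl, rfl⟩ := MulAction.is_two_pretransitive_iff.1
    (Equiv.Perm.isMultiplyPretransitive n 2) huv hxy
  simp only [Equiv.Perm.smul_def]
  rw [← comp_blockWord, hF.map_basis_comp_perm]

lemma map_basis_const_eq_sum [Fintype n] {F : MultilinearMap ℝ (fun _ : Fin 4 => E) G}
    (hF : IsIsotropic F) (b : OrthonormalBasis n ℝ E) {u v : n} (huv : u ≠ v) (x : n) :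
    F (fun _ => b x) = ∑ p ∈ pairings4, F (b ∘ blockWord p u v) := by
  rw [hF.map_const_eq (y := b u) (by simp),
    hF.map_const_eq_sum_blockWord (y := b v) (by simp) (b.inner_eq_zero huv)]
  simp only [comp_blockWord]

theorem map_basis_eq_sum [Fintype n] [DecidableEq n]
    {F : MultilinearMap ℝ (fun _ : Fin 4 => E) G} (hF : IsIsotropic F)
    (b : OrthonormalBasis n ℝ E) {u v : n} (huv : u ≠ v) (i : Fin 4 → n) :
    F (b ∘ i) = ∑ p ∈ pairings4, pairingDelta p i • F (b ∘ blockWord p u v) := by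
  by_cases hi : ∃ q ∈ pairings4, ∃ x y, i = blockWord q x y
  · obtain ⟨q, hq, x, y, rfl⟩ := hi
    have hsum : ∀ p ∈ pairings4, pairingDelta p (blockWord q x y) • F (b ∘ blockWord p u v) =
        if p = q ∨ x = y then F (b ∘ blockWord p u v) else 0 := fun p hp => by
      rw [pairingDelta_blockWord hp hq, ite_smul, one_smul, zero_smul]
    rw [Finset.sum_congr rfl hsum]
    rcases eq_or_ne x y with rfl | hxy
    · simpa [blockWord_self, Function.comp_def] using hF.map_basis_const_eq_sum b huv x
    · simp [hxy, hq, hF.map_basis_blockWord b hxy huv]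
  · have hdelta : ∀ p ∈ pairings4, ¬∀ l, i l = i (p l) := fun p hp h =>
      hi ⟨p, hp, (forall_eq_apply_pairing_iff hp i).1 h⟩
    obtain ⟨x, hx⟩ : ∃ x, ¬Even (Finset.univ.filter fun l => i l = x).card := by
      contrapose! hdelta
      exact exists_pairing_of_even_card_fiber hdelta
    have hzero : F (b ∘ i) = 0 :=
      hF.map_eq_zero_of_odd (x := b x) (Nat.not_even_iff_odd.1 hx) (by simp +contextual)
        fun l hl => b.inner_eq_zero fun h => hl (by simp [h])
    rw [hzero]
    refine (Finset.sum_eq_zero fun p hp => ?_).symm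
    rw [pairingDelta_eq_ite, if_neg (hdelta p hp), zero_smul]

lemma sum_map_basis_blockWord [Fintype n] {F : MultilinearMap ℝ (fun _ : Fin 4 => E) G}
    (hF : IsIsotropic F) (b : OrthonormalBasis n ℝ E) {u v : n} (huv : u ≠ v)
    (q : Equiv.Perm (Fin 4)) :
    ∑ x, ∑ y, F (b ∘ blockWord q x y) =
      ((Fintype.card n : ℝ) * (Fintype.card n - 1)) • F (b ∘ blockWord q u v) +
        (Fintype.card n : ℝ) • ∑ p ∈ pairings4, F (b ∘ blockWord p u v) := by
  classical
  have hrow : ∀ x, ∑ y, F (b ∘ blockWord q x y) =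
      ((Fintype.card n : ℝ) - 1) • F (b ∘ blockWord q u v) +
        ∑ p ∈ pairings4, F (b ∘ blockWord p u v) := fun x => by
    have hdiag : F (b ∘ blockWord q x x) = ∑ p ∈ pairings4, F (b ∘ blockWord p u v) := by
      rw [blockWord_self]
      exact hF.map_basis_const_eq_sum b huv x
    have hoff : ∀ y ∈ Finset.univ.erase x,
        F (b ∘ blockWord q x y) = F (b ∘ blockWord q u v) := fun y hy =>
      hF.map_basis_blockWord b (Finset.ne_of_mem_erase hy).symm huv q
    rw [← Finset.sum_erase_add _ _ (Finset.mem_univ x), hdiag, Finset.sum_congr rfl hoff,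
      Finset.sum_const, Finset.card_erase_of_mem (Finset.mem_univ x), Finset.card_univ,
      ← Nat.cast_smul_eq_nsmul ℝ, Nat.cast_pred (Fintype.card_pos_iff.2 ⟨x⟩)]
  simp only [hrow, Finset.sum_const, Finset.card_univ, ← Nat.cast_smul_eq_nsmul ℝ, smul_add,
    mul_smul]

end IsIsotropic

section Weingarten

lemma eq_of_forall_mul_add_sum_eq {κ K : Type*} [Field K] {s : Finset κ} {a b : K} {c y : κ → K}
    (ha : a ≠ 0) (hab : a + s.card * b ≠ 0) (h : ∀ q ∈ s, a * c q + b * ∑ p ∈ s, c p = y q)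
    {p : κ} (hp : p ∈ s) : c p = (y p - b / (a + s.card * b) * ∑ q ∈ s, y q) / a := by
  have hsum : (a + s.card * b) * ∑ q ∈ s, c q = ∑ q ∈ s, y q := by
    rw [← Finset.sum_congr rfl h, Finset.sum_add_distrib, ← Finset.mul_sum, Finset.sum_const,
      nsmul_eq_mul]
    ring
  rw [← h p hp, ← hsum, ← mul_assoc, div_mul_cancel₀ _ hab, add_sub_cancel_right,
    mul_div_cancel_left₀ _ ha]

/-- The second-order Weingarten function of the orthogonal group in dimension `d`, with values
`Wg(d,(1,1))` on the diagonal and `Wg(d,(2))` off it. -/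
noncomputable def weingarten (d : ℝ) (p q : Equiv.Perm (Fin 4)) : ℝ :=
  if p = q then (d + 1) / (d * (d - 1) * (d + 2)) else -1 / (d * (d - 1) * (d + 2))

lemma eq_sum_mul_weingarten {d : ℝ} (hd : 1 < d) {c y : Equiv.Perm (Fin 4) → ℝ}
    (h : ∀ q ∈ pairings4, d * (d - 1) * c q + d * ∑ p ∈ pairings4, c p = y q)
    {p : Equiv.Perm (Fin 4)} (hp : p ∈ pairings4) :
    c p = ∑ q ∈ pairings4, y q * weingarten d p q := by
  have hd0 : d ≠ 0 := by positivity
  have hd1 : d - 1 ≠ 0 := by linarith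
  have hd2 : d + 2 ≠ 0 := by positivity
  have hcard : d * (d - 1) + (pairings4.card : ℝ) * d = d * (d + 2) := by
    rw [show pairings4.card = 3 by decide]
    push_cast
    ring
  have hweight : ∀ q, weingarten d p q =
      (if p = q then 1 / (d * (d - 1)) else 0) - 1 / (d * (d - 1) * (d + 2)) := fun q => by
    rw [weingarten]
    split_ifs
    · field_simp
      ring
    · ring
  rw [eq_of_forall_mul_add_sum_eq (mul_ne_zero hd0 hd1) (hcard ▸ mul_ne_zero hd0 hd2) h hp, hcard]
  simp only [hweight, mul_sub, Finset.sum_sub_distrib, ← Finset.sum_mul, mul_ite, mul_zero,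
    Finset.sum_ite_eq, hp, if_true]
  field_simp

end Weingarten

section HaarMoments

variable {n ι : Type*} [Fintype n] [Fintype ι]

/-- The product of the coordinates `j l` of the row vectors `v l ᵥ* M`, as a multilinear form in the
`v l`. -/
noncomputable def columnForm (M : Matrix n n ℝ) (j : ι → n) :
    MultilinearMap ℝ (fun _ : ι => EuclideanSpace ℝ n) ℝ :=
  (MultilinearMap.mkPiAlgebra ℝ ι ℝ).compLinearMap fun l =>
    LinearMap.proj (j l) ∘ₗ M.vecMulLinear ∘ₗ (WithLp.linearEquiv 2 ℝ (n → ℝ)).toLinearMap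

lemma columnForm_apply (M : Matrix n n ℝ) (j : ι → n) (v : ι → EuclideanSpace ℝ n) :
    columnForm M j v = ∏ l, ((v l).ofLp ᵥ* M) (j l) :=
  rfl

lemma columnForm_basisFun (M : Matrix n n ℝ) (i j : ι → n) :
    columnForm M j (EuclideanSpace.basisFun n ℝ ∘ i) = ∏ l, M (i l) (j l) := by
  classical simp [columnForm_apply]

variable [DecidableEq n]

lemma exists_orthogonalGroup_mulVec_eq (g : EuclideanSpace ℝ n ≃ₗᵢ[ℝ] EuclideanSpace ℝ n) :
    ∃ A : orthogonalGroup n ℝ, ∀ x, (g x).ofLp = (A : Matrix n n ℝ) *ᵥ x.ofLp := by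
  obtain ⟨A, hA⟩ := EquivLike.surjective (toEuclideanCLM (n := n) (𝕜 := ℝ))
    (Unitary.linearIsometryEquiv.symm g : EuclideanSpace ℝ n →L[ℝ] EuclideanSpace ℝ n)
  have hunit : star A * A = 1 := EquivLike.injective (toEuclideanCLM (n := n) (𝕜 := ℝ)) <| by
    rw [map_mul, map_star, map_one, hA]
    exact Unitary.star_mul_self_of_mem (Unitary.linearIsometryEquiv.symm g).2
  refine ⟨⟨A, (mem_orthogonalGroup_iff' n ℝ).2 hunit⟩, fun x => ?_⟩
  rw [← ofLp_toEuclideanCLM, hA]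
  rfl

lemma norm_vecMul_apply_le (M : orthogonalGroup n ℝ) (v : n → ℝ) (k : n) :
    ‖(v ᵥ* (M : Matrix n n ℝ)) k‖ ≤ ∑ x, ‖v x‖ := by
  refine norm_sum_le_of_le _ fun x _ => ?_
  rw [norm_mul]
  exact mul_le_of_le_one_right (norm_nonneg _) (entry_norm_bound_of_unitary M.2 x k)

lemma sum_mul_apply_orthogonalGroup (M : orthogonalGroup n ℝ) (a b : n) :
    ∑ x, (M : Matrix n n ℝ) x a * (M : Matrix n n ℝ) x b = if a = b then 1 else 0 := by
  have h := congrFun₂ ((mem_orthogonalGroup_iff' n ℝ).1 M.2) a b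
  simpa [mul_apply, one_apply] using h

lemma sum_columnForm_blockWord (M : orthogonalGroup n ℝ) (j : Fin 4 → n)
    {q : Equiv.Perm (Fin 4)} (hq : q ∈ pairings4) :
    ∑ x, ∑ y, columnForm (M : Matrix n n ℝ) j (EuclideanSpace.basisFun n ℝ ∘ blockWord q x y) =
      pairingDelta q j := by
  obtain ⟨k, hk⟩ := exists_notMem_block q
  have hqk : ¬(q k = 0 ∨ q k = q 0) :=
    mt ((mem_block_iff_mem_block hq k (q k)).2 (.inr rfl)).2 hk
  have hinv : ∀ l, q (q l) = l := Equiv.Perm.ext_iff.1 (Finset.mem_filter.1 hq).2.1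
  calc ∑ x, ∑ y, columnForm (M : Matrix n n ℝ) j (EuclideanSpace.basisFun n ℝ ∘ blockWord q x y)
      = ∑ x, ∑ y, (M : Matrix n n ℝ) x (j 0) * (M : Matrix n n ℝ) x (j (q 0)) *
          ((M : Matrix n n ℝ) y (j k) * (M : Matrix n n ℝ) y (j (q k))) := by
        simp only [columnForm_basisFun, prod_eq_mul_of_notMem_block hq hk, blockWord, hk, hqk,
          true_or, or_true, if_true, if_false]
    _ = (if j 0 = j (q 0) then 1 else 0) * if j k = j (q k) then 1 else 0 := by
        rw [← Finset.sum_mul_sum, sum_mul_apply_orthogonalGroup, sum_mul_apply_orthogonalGroup]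
    _ = pairingDelta q j := by
        rw [pairingDelta, prod_eq_mul_of_notMem_block hq hk]
        simp only [hinv, eq_comm (a := j (q _)), mul_ite, mul_one, mul_zero]
        split_ifs <;> rfl

variable [MeasurableSpace (orthogonalGroup n ℝ)] [BorelSpace (orthogonalGroup n ℝ)]

lemma integrable_columnForm (μ : Measure (orthogonalGroup n ℝ)) [IsFiniteMeasure μ]
    (j : ι → n) (v : ι → EuclideanSpace ℝ n) :
    Integrable (fun M : orthogonalGroup n ℝ => columnForm (M : Matrix n n ℝ) j v) μ := by
  simp only [columnForm_apply]
  refine Integrable.of_bound (C := ∏ l, ∑ x, ‖v l x‖) ?_ (.of_forall fun M => ?_)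
  · refine (continuous_finsetProd _ fun l _ => ?_).aestronglyMeasurable
    exact (continuous_apply _).comp (continuous_const.matrix_vecMul continuous_subtype_val)
  · rw [norm_prod]
    exact Finset.prod_le_prod (fun _ _ => norm_nonneg _) fun l _ => norm_vecMul_apply_le M _ _

/-- The joint moments of the columns `j l` of a random orthogonal matrix, as a multilinear form in
the test vectors: `v ↦ E[∏ l, ⟪v l, M e_{j l}⟫]`. -/
noncomputable def momentForm (μ : Measure (orthogonalGroup n ℝ)) [IsFiniteMeasure μ]
    (j : ι → n) : MultilinearMap ℝ (fun _ : ι => EuclideanSpace ℝ n) ℝ where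
  toFun v := ∫ M : orthogonalGroup n ℝ, columnForm (M : Matrix n n ℝ) j v ∂μ
  map_update_add' v k x y := by
    simp only [MultilinearMap.map_update_add]
    exact integral_add (integrable_columnForm μ j _) (integrable_columnForm μ j _)
  map_update_smul' v k c x := by
    simp only [MultilinearMap.map_update_smul]
    exact integral_smul _ _

lemma momentForm_apply (μ : Measure (orthogonalGroup n ℝ)) [IsFiniteMeasure μ] (j : ι → n)
    (v : ι → EuclideanSpace ℝ n) :
    momentForm μ j v = ∫ M : orthogonalGroup n ℝ, columnForm (M : Matrix n n ℝ) j v ∂μ :=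
  rfl

lemma isIsotropic_momentForm (μ : Measure (orthogonalGroup n ℝ)) [IsFiniteMeasure μ]
    [μ.IsMulLeftInvariant] (j : ι → n) : IsIsotropic (momentForm μ j) := by
  intro g v
  obtain ⟨A, hA⟩ := exists_orthogonalGroup_mulVec_eq g
  have htranspose : ∀ M : orthogonalGroup n ℝ, columnForm (M : Matrix n n ℝ) j (g ∘ v) =
      columnForm ((A⁻¹ * M : orthogonalGroup n ℝ) : Matrix n n ℝ) j v := fun M => by
    simp only [columnForm_apply, Function.comp_apply]
    refine Finset.prod_congr rfl fun l _ => congrFun ?_ (j l)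
    change (g (v l)).ofLp ᵥ* (M : Matrix n n ℝ) =
      (v l).ofLp ᵥ* (star (A : Matrix n n ℝ) * (M : Matrix n n ℝ))
    rw [hA, ← vecMul_transpose, vecMul_vecMul]
    rfl
  simp only [momentForm_apply, htranspose]
  exact integral_mul_left_eq_self
    (fun M : orthogonalGroup n ℝ => columnForm (M : Matrix n n ℝ) j v) A⁻¹

lemma sum_momentForm_blockWord (μ : Measure (orthogonalGroup n ℝ)) [IsProbabilityMeasure μ]
    (j : Fin 4 → n) {q : Equiv.Perm (Fin 4)} (hq : q ∈ pairings4) :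
    ∑ x, ∑ y, momentForm μ j (EuclideanSpace.basisFun n ℝ ∘ blockWord q x y) =
      pairingDelta q j := by
  simp only [momentForm_apply]
  rw [Finset.sum_congr rfl fun x _ =>
      (integral_finsetSum _ fun y _ => integrable_columnForm μ j _).symm,
    ← integral_finsetSum _ fun x _ => integrable_finsetSum _ fun y _ => integrable_columnForm μ j _]
  simp [sum_columnForm_blockWord _ j hq]

end HaarMoments

theorem orthogonal_haar_second_moment_general {n : Type*} [Fintype n] [DecidableEq n]
    [MeasurableSpace (orthogonalGroup n ℝ)] [BorelSpace (orthogonalGroup n ℝ)]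
    (hn : 2 ≤ Fintype.card n) (μ : Measure (orthogonalGroup n ℝ)) [μ.IsMulLeftInvariant]
    [IsProbabilityMeasure μ] (i j : Fin 4 → n) :
    ∫ M : orthogonalGroup n ℝ, ∏ l, (M : Matrix n n ℝ) (i l) (j l) ∂μ =
      ∑ p ∈ pairings4, ∑ q ∈ pairings4,
        pairingDelta p i * pairingDelta q j * weingarten (Fintype.card n) p q := by
  obtain ⟨u, v, huv⟩ := Fintype.exists_pair_of_one_lt_card hn
  let b := EuclideanSpace.basisFun n ℝ
  let c : Equiv.Perm (Fin 4) → ℝ := fun p => momentForm μ j (b ∘ blockWord p u v)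
  have hF := isIsotropic_momentForm μ j
  have hgram : ∀ q ∈ pairings4, (Fintype.card n : ℝ) * (Fintype.card n - 1) * c q +
      Fintype.card n * ∑ p ∈ pairings4, c p = pairingDelta q j := fun q hq =>
    (hF.sum_map_basis_blockWord b huv q).symm.trans (sum_momentForm_blockWord μ j hq)
  calc ∫ M : orthogonalGroup n ℝ, ∏ l, (M : Matrix n n ℝ) (i l) (j l) ∂μ
      = momentForm μ j (b ∘ i) := by simp only [momentForm_apply, b, columnForm_basisFun]
    _ = ∑ p ∈ pairings4, pairingDelta p i * c p := hF.map_basis_eq_sum b huv i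
    _ = ∑ p ∈ pairings4, ∑ q ∈ pairings4,
          pairingDelta p i * pairingDelta q j * weingarten (Fintype.card n) p q := by
      refine Finset.sum_congr rfl fun p hp => ?_
      rw [eq_sum_mul_weingarten (by exact_mod_cast hn) hgram hp, Finset.mul_sum]
      simp only [mul_assoc]

/-- Second-order Weingarten formula for the orthogonal group. For a pairing `p`, encoded as a
fixed-point-free involution, `Δ_p(i) = ∏_x δ(i_x, i_{p x})` (the Kronecker delta is `{0,1}`-valued
and idempotent, so this is the product over the blocks of `p`). The weight is
`Wg(d,(1,1)) = (d+1)/(d(d−1)(d+2))` for `p = q` and `Wg(d,(2)) = −1/(d(d−1)(d+2))` otherwise. -/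
theorem orthogonal_haar_second_moment {d : ℕ} (hd : 2 ≤ d)
    (μ : Measure (Matrix.orthogonalGroup (Fin d) ℝ)) [μ.IsHaarMeasure] [IsProbabilityMeasure μ]
    (i j : Fin 4 → Fin d) :
    ∫ M : Matrix.orthogonalGroup (Fin d) ℝ,
        ∏ ℓ, (M : Matrix (Fin d) (Fin d) ℝ) (i ℓ) (j ℓ) ∂μ
      = ∑ p ∈ pairings4, ∑ q ∈ pairings4,
          (∏ x, if i x = i (p x) then (1 : ℝ) else 0) *
          (∏ x, if j x = j (q x) then (1 : ℝ) else 0) *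
          (if p = q then ((d : ℝ) + 1) / ((d : ℝ) * ((d : ℝ) - 1) * ((d : ℝ) + 2))
           else -1 / ((d : ℝ) * ((d : ℝ) - 1) * ((d : ℝ) + 2))) := by
  simpa only [Fintype.card_fin] using!
    orthogonal_haar_second_moment_general (by simpa using hd) μ i j
end

section
/- Let d ≥ 2, let A, B, C be fixed d×d real matrices, and let M be distributed according to the normalized Haar probability measure on O(d). Then, entrywise, E[ M A Mᵀ B M C Mᵀ ] = ((d+1)/(d(d−1)(d+2))) · ( trace(A) trace(C) · B + trace(AC) trace(B) · I + trace(ACᵀ) · Bᵀ ) − (1/(d(d−1)(d+2))) · ( trace(AC) · B + trace(A) trace(B) trace(C) · I + trace(ACᵀ) · B + trace(ACᵀ) trace(B) · I + trace(A) trace(C) · Bᵀ + trace(AC) · Bᵀ ). -/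
open MeasureTheory Matrix

/-!
The map `L B = E[M A Mᵀ B M C Mᵀ]` is linear and, by invariance of the Haar measure, commutes with
conjugation by orthogonal matrices. Sign changes and permutations of coordinates already force
`L E_pq = α E_pq + β E_qp` for `p ≠ q` and `L E_pp = γ I + δ E_pp` with constants independent of
`p` and `q`. A reflection mixing two coordinates takes `E_pp - E_qq` to a combination of itself
and `E_pq + E_qp`, which forces `δ = α + β`, so that `L B = α B + β Bᵀ + γ (tr B) I`.
The three coefficients follow from three contractions of `L`, on each of which the integrand does
not depend on `M`: they equal `tr A tr C`, `tr (A Cᵀ)` and `tr (A C)`.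
-/

section OrthogonalMatrices

variable {n K : Type*} [Fintype n] [DecidableEq n]

theorem trace_conj_of_mem_orthogonalGroup [CommRing K] {M : Matrix n n K}
    (hM : M ∈ orthogonalGroup n K) (A : Matrix n n K) : (M * A * Mᵀ).trace = A.trace := by
  rw [trace_mul_comm, ← Matrix.mul_assoc, (mem_orthogonalGroup_iff' n K).1 hM, Matrix.one_mul]

theorem conj_mul_conj_of_mem_orthogonalGroup [CommRing K] {M : Matrix n n K}
    (hM : M ∈ orthogonalGroup n K) (A C : Matrix n n K) :
    M * A * Mᵀ * (M * C * Mᵀ) = M * (A * C) * Mᵀ := by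
  calc M * A * Mᵀ * (M * C * Mᵀ) = M * A * (Mᵀ * M) * C * Mᵀ := by simp only [Matrix.mul_assoc]
    _ = M * (A * C) * Mᵀ := by
      rw [(mem_orthogonalGroup_iff' n K).1 hM, Matrix.mul_one, Matrix.mul_assoc M]

theorem one_sub_smul_vecMulVec_mem_orthogonalGroup [CommRing K] {v : n → K} {c : K}
    (hc : c * (v ⬝ᵥ v) = 2) : 1 - c • vecMulVec v v ∈ orthogonalGroup n K := by
  have hsq : vecMulVec v v * vecMulVec v v = (v ⬝ᵥ v) • vecMulVec v v := by
    rw [vecMulVec_mul_vecMulVec, vecMulVec_smul]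
  rw [mem_orthogonalGroup_iff, transpose_sub, transpose_one, transpose_smul, transpose_vecMulVec]
  calc (1 - c • vecMulVec v v) * (1 - c • vecMulVec v v)
      = 1 + (c * (c * (v ⬝ᵥ v) - 2)) • vecMulVec v v := by
        simp only [sub_mul, mul_sub, one_mul, mul_one, smul_mul_assoc, mul_smul_comm, hsq]
        module
    _ = 1 := by rw [hc, sub_self, mul_zero, zero_smul, add_zero]

theorem exists_mem_orthogonalGroup_mulVec_single [Field K] [CharZero K] {p q : n} (hpq : p ≠ q) :
    ∃ R ∈ orthogonalGroup n K,
      R *ᵥ Pi.single p 1 = (3 / 5 : K) • Pi.single p 1 - (4 / 5 : K) • Pi.single q 1 ∧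
      R *ᵥ Pi.single q 1 = -(4 / 5 : K) • Pi.single p 1 - (3 / 5 : K) • Pi.single q 1 := by
  -- The reflection in the hyperplane orthogonal to `v` has rational entries.
  set v : n → K := Pi.single p 1 + (2 : K) • Pi.single q 1 with hv
  have hvp : v ⬝ᵥ Pi.single p 1 = 1 := by simp [hv, hpq]
  have hvq : v ⬝ᵥ Pi.single q 1 = 2 := by simp [hv, hpq.symm]
  have hvv : (2 / 5 : K) * (v ⬝ᵥ v) = 2 := by
    nth_rw 2 [hv]
    rw [dotProduct_add, dotProduct_smul, hvp, hvq, smul_eq_mul]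
    norm_num
  have hreflect (w : n → K) :
      (1 - (2 / 5 : K) • vecMulVec v v) *ᵥ w = w - (2 / 5 * (v ⬝ᵥ w)) • v := by
    rw [sub_mulVec, one_mulVec, smul_mulVec, vecMulVec_mulVec, op_smul_eq_smul, smul_smul]
  refine ⟨_, one_sub_smul_vecMulVec_mem_orthogonalGroup hvv, ?_, ?_⟩
  · rw [hreflect, hvp, hv]
    module
  · rw [hreflect, hvq, hv]
    module

end OrthogonalMatrices

theorem mul_single_one_mul_apply {l m n o K : Type*} [Fintype m] [Fintype n] [DecidableEq m]
    [DecidableEq n] [Semiring K] (P : Matrix l m K) (Q : Matrix n o K) (i : m) (j : n)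
    (k : l) (r : o) : (P * single i j (1 : K) * Q) k r = P k i * Q j r := by
  rw [single_eq_single_vecMulVec_single, mul_vecMulVec, vecMulVec_mul, vecMulVec_apply,
    mulVec_single_one, single_one_vecMul, col_apply, row_apply]

theorem exists_perm_apply_eq {α : Type*} {a b c d : α} (hab : a ≠ b) (hcd : c ≠ d) :
    ∃ σ : Equiv.Perm α, σ a = c ∧ σ b = d :=
  MulAction.is_two_pretransitive_iff.1 (Equiv.Perm.isMultiplyPretransitive α 2) hab hcd

/-- Equivariance of a linear endomorphism of square matrices under the conjugation action
`X ↦ R * X * Rᵀ` of the orthogonal group. -/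
def IsOrthogonallyEquivariant {n K : Type*} [Fintype n] [DecidableEq n] [CommRing K]
    (L : Matrix n n K →ₗ[K] Matrix n n K) : Prop :=
  ∀ R ∈ orthogonalGroup n K, ∀ X, L (R * X * Rᵀ) = R * L X * Rᵀ

namespace IsOrthogonallyEquivariant

section CommRing

variable {n K : Type*} [Fintype n] [DecidableEq n] [CommRing K]
  {L : Matrix n n K →ₗ[K] Matrix n n K}

theorem map_submatrix (hL : IsOrthogonallyEquivariant L) (σ : Equiv.Perm n) (X : Matrix n n K) :
    L (X.submatrix σ σ) = (L X).submatrix σ σ := by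
  have hσ : σ.permMatrix K ∈ orthogonalGroup n K := by
    rw [mem_orthogonalGroup_iff, transpose_permMatrix, ← permMatrix_mul, inv_mul_cancel,
      permMatrix_one]
  have hconj (Y : Matrix n n K) : σ.permMatrix K * Y * (σ.permMatrix K)ᵀ = Y.submatrix σ σ := by
    rw [transpose_permMatrix, Equiv.Perm.permMatrix, Equiv.Perm.permMatrix,
      PEquiv.toMatrix_toPEquiv_mul, PEquiv.mul_toMatrix_toPEquiv, submatrix_submatrix]
    rfl
  rw [← hconj, ← hconj, hL _ hσ]

theorem map_single_apply_perm (hL : IsOrthogonallyEquivariant L) (σ : Equiv.Perm n)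
    (p q i j : n) : L (single (σ p) (σ q) 1) (σ i) (σ j) = L (single p q 1) i j := by
  have h := hL.map_submatrix σ (single (σ p) (σ q) 1)
  rw [submatrix_single_equiv, σ.symm_apply_apply, σ.symm_apply_apply] at h
  rw [h, submatrix_apply]

end CommRing

variable {n K : Type*} [Fintype n] [DecidableEq n] [Field K] [CharZero K]
  {L : Matrix n n K →ₗ[K] Matrix n n K}

/- Changing the sign of the coordinate `r` multiplies the entry `(i, j)` of a matrix by `-1` exactly
when one of `i` and `j`, but not both, equals `r`. -/
theorem map_single_apply_eq_zero (hL : IsOrthogonallyEquivariant L) {p q i j : n} (r : n)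
    (h : ¬((i = r ↔ j = r) ↔ (p = r ↔ q = r))) : L (single p q 1) i j = 0 := by
  set e : n → K := fun k => if k = r then -1 else 1 with he
  have hsign (k l : n) : e k * e l = if k = r ↔ l = r then 1 else -1 := by
    by_cases hk : k = r <;> by_cases hl : l = r <;> simp [he, hk, hl]
  have hD : diagonal e ∈ orthogonalGroup n K := by
    simp [mem_orthogonalGroup_iff, diagonal_mul_diagonal, hsign]
  have hconj (X : Matrix n n K) (k l : n) :
      (diagonal e * X * (diagonal e)ᵀ) k l = e k * e l * X k l := by
    rw [diagonal_transpose, mul_diagonal, diagonal_mul, mul_right_comm]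
  have hsingle : diagonal e * single p q 1 * (diagonal e)ᵀ = (e p * e q) • single p q 1 := by
    ext k l
    rw [hconj, Matrix.smul_apply, smul_eq_mul]
    by_cases hkl : p = k ∧ q = l
    · rw [hkl.1, hkl.2]
    · rw [single_apply_of_ne _ _ _ _ _ hkl, mul_zero, mul_zero]
  have hflip : e p * e q * L (single p q 1) i j = e i * e j * L (single p q 1) i j := by
    rw [← hconj, ← hL _ hD, hsingle, map_smul, Matrix.smul_apply, smul_eq_mul]
  rw [hsign, hsign] at hflip
  grind

theorem exists_map_single_self [Nontrivial n] (hL : IsOrthogonallyEquivariant L) :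
    ∃ γ δ : K, ∀ p, L (single p p 1) = γ • 1 + δ • single p p 1 := by
  obtain ⟨a, b, hab⟩ := exists_pair_ne n
  refine ⟨L (single a a 1) b b, L (single a a 1) a a - L (single a a 1) b b, fun p => ?_⟩
  ext i j
  rcases ne_or_eq i j with hij | rfl
  · have hzero : L (single p p 1) i j = 0 := hL.map_single_apply_eq_zero i (by simp [hij.symm])
    have hsingle : single p p (1 : K) i j = 0 := single_apply_of_ne _ _ _ _ _ (by grind)
    simp only [hzero, hsingle, one_apply_ne hij, Matrix.add_apply, Matrix.smul_apply, smul_zero,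
      add_zero]
  rcases ne_or_eq p i with hpi | rfl
  · obtain ⟨σ, hσp, hσi⟩ := exists_perm_apply_eq hpi hab
    rw [← hL.map_single_apply_perm σ, hσp, hσi]
    simp [hpi]
  · rw [← hL.map_single_apply_perm (Equiv.swap p a), Equiv.swap_apply_left]
    simp

theorem exists_map_single_of_ne [Nontrivial n] (hL : IsOrthogonallyEquivariant L) :
    ∃ α β : K, ∀ p q, p ≠ q → L (single p q 1) = α • single p q 1 + β • single q p 1 := by
  obtain ⟨a, b, hab⟩ := exists_pair_ne n
  refine ⟨L (single a b 1) a b, L (single a b 1) b a, fun p q hpq => ?_⟩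
  obtain ⟨σ, hσp, hσq⟩ := exists_perm_apply_eq hpq hab
  rw [← hσp, ← hσq, hL.map_single_apply_perm, hL.map_single_apply_perm]
  ext i j
  by_cases hpair : (i = p ∧ j = q) ∨ (i = q ∧ j = p)
  · rcases hpair with ⟨rfl, rfl⟩ | ⟨rfl, rfl⟩ <;> simp [hpq, hpq.symm]
  · have hzero : L (single p q 1) i j = 0 := by
      by_cases hp : i = p ↔ j = p
      · exact hL.map_single_apply_eq_zero p (by simp [hp, hpq.symm])
      · exact hL.map_single_apply_eq_zero q (by grind)
    have hsingle : single p q (1 : K) i j = 0 := single_apply_of_ne _ _ _ _ _ (by grind)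
    have hsingle' : single q p (1 : K) i j = 0 := single_apply_of_ne _ _ _ _ _ (by grind)
    simp only [hzero, hsingle, hsingle', Matrix.add_apply, Matrix.smul_apply, smul_zero, add_zero]

theorem coeff_single_self_eq_add [Nontrivial n] (hL : IsOrthogonallyEquivariant L) {α β γ δ : K}
    (hdiag : ∀ p, L (single p p 1) = γ • 1 + δ • single p p 1)
    (hoff : ∀ p q, p ≠ q → L (single p q 1) = α • single p q 1 + β • single q p 1) :
    δ = α + β := by
  obtain ⟨p, q, hpq⟩ := exists_pair_ne n
  obtain ⟨R, hR, hRp, hRq⟩ := exists_mem_orthogonalGroup_mulVec_single (K := K) hpq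
  set D : Matrix n n K := single p p 1 - single q q 1 with hD
  set S : Matrix n n K := single p q 1 + single q p 1 with hS
  have hLD : L D = δ • D := by
    rw [hD, map_sub, hdiag, hdiag]
    module
  have hLS : L S = (α + β) • S := by
    rw [hS, map_add, hoff p q hpq, hoff q p hpq.symm]
    module
  have hconj : R * D * Rᵀ = (-7 / 25 : K) • D - (24 / 25 : K) • S := by
    simp only [hD, hS, single_eq_single_vecMulVec_single, mul_sub, sub_mul, mul_vecMulVec,
      vecMulVec_mul, vecMul_transpose, hRp, hRq]
    ext i j
    simp only [vecMulVec_apply, Matrix.sub_apply, Matrix.add_apply, Matrix.smul_apply,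
      Pi.sub_apply, Pi.smul_apply, smul_eq_mul]
    ring
  have hDpq : D p q = 0 := by simp [hD, hpq, hpq.symm]
  have hSpq : S p q = 1 := by simp [hS, hpq]
  have hequiv := hL R hR D
  rw [hLD, Matrix.mul_smul, Matrix.smul_mul, hconj, map_sub, map_smul, map_smul, hLD, hLS]
    at hequiv
  have hentry := congr_fun₂ hequiv p q
  simp only [Matrix.sub_apply, Matrix.smul_apply, smul_eq_mul, hDpq, hSpq] at hentry
  linear_combination (25 / 24 : K) * hentry

theorem exists_map_eq [Nontrivial n] (hL : IsOrthogonallyEquivariant L) :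
    ∃ α β γ : K, ∀ X, L X = α • X + β • Xᵀ + (γ * X.trace) • 1 := by
  obtain ⟨γ, δ, hdiag⟩ := hL.exists_map_single_self
  obtain ⟨α, β, hoff⟩ := hL.exists_map_single_of_ne
  have hδ : δ = α + β := hL.coeff_single_self_eq_add hdiag hoff
  let L' : Matrix n n K →ₗ[K] Matrix n n K :=
    α • LinearMap.id + β • (transposeLinearEquiv n n K K).toLinearMap +
      γ • (traceLinearMap n K K).smulRight 1
  have hL' (X : Matrix n n K) : L' X = α • X + β • Xᵀ + (γ * X.trace) • 1 := by
    simp [L', smul_smul]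
  refine ⟨α, β, γ, fun X => ?_⟩
  suffices L = L' by rw [this, hL']
  refine ext_linearMap K fun p q => LinearMap.ext_ring ?_
  rw [LinearMap.comp_apply, LinearMap.comp_apply, hL', singleLinearMap_apply]
  rcases ne_or_eq p q with hpq | rfl
  · rw [hoff p q hpq, transpose_single, trace_single_eq_of_ne _ _ _ hpq]
    module
  · rw [hdiag, hδ, transpose_single, trace_single_eq_same]
    module

theorem smul_map_eq_of_contractions [Nontrivial n] (hL : IsOrthogonallyEquivariant L)
    {t₁ t₂ t₃ : K} (h₁ : ∑ i, ∑ j, L (single i j 1) i j = t₁)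
    (h₂ : ∑ i, ∑ j, L (single i j 1) j i = t₂) (h₃ : (L 1).trace = t₃) (X : Matrix n n K) :
    ((Fintype.card n : K) * (Fintype.card n - 1) * (Fintype.card n + 2)) • L X =
      ((Fintype.card n + 1) * t₁ - t₂ - t₃) • X + ((Fintype.card n + 1) * t₂ - t₁ - t₃) • Xᵀ +
        (((Fintype.card n + 1) * t₃ - t₁ - t₂) * X.trace) • 1 := by
  obtain ⟨α, β, γ, hL'⟩ := hL.exists_map_eq
  generalize hd : (Fintype.card n : K) = d
  have entry_same (i j : n) : L (single i j 1) i j = α + if i = j then β + γ else 0 := by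
    rcases ne_or_eq i j with hij | rfl
    · simp [hL', hij]
    · simp [hL', add_assoc]
  have entry_swap (i j : n) : L (single i j 1) j i = β + if i = j then α + γ else 0 := by
    rcases ne_or_eq i j with hij | rfl
    · simp [hL', hij, hij.symm]
    · simp [hL', add_assoc, add_left_comm]
  have ht₁ : t₁ = d * (d * α + β + γ) := by
    simp only [← h₁, entry_same, Finset.sum_add_distrib, Finset.sum_const, Finset.sum_ite_eq,
      Finset.mem_univ, if_true, Finset.card_univ, nsmul_eq_mul, hd]
    ring
  have ht₂ : t₂ = d * (d * β + α + γ) := by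
    simp only [← h₂, entry_swap, Finset.sum_add_distrib, Finset.sum_const, Finset.sum_ite_eq,
      Finset.mem_univ, if_true, Finset.card_univ, nsmul_eq_mul, hd]
    ring
  have ht₃ : t₃ = d * (d * γ + α + β) := by
    simp only [← h₃, hL', transpose_one, trace_add, trace_smul, trace_one, hd, smul_eq_mul]
    ring
  rw [hL', ht₁, ht₂, ht₃]
  module

end IsOrthogonallyEquivariant

instance compactSpace_orthogonalGroup {n : Type*} [Fintype n] [DecidableEq n] :
    CompactSpace (orthogonalGroup n ℝ) := by
  have hcube : IsCompact (Set.univ.pi fun _ => Set.univ.pi fun _ => Set.Icc (-1) 1 :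
      Set (Matrix n n ℝ)) :=
    isCompact_univ_pi fun _ => isCompact_univ_pi fun _ => isCompact_Icc
  have hclosed : IsClosed (orthogonalGroup n ℝ : Set (Matrix n n ℝ)) := isClosed_unitary
  exact isCompact_iff_compactSpace.1 <| hcube.of_isClosed_subset hclosed fun M hM i _ j _ =>
    abs_le.1 (entry_norm_bound_of_unitary hM i j)

theorem sum_sum_integral_eq {ι κ Ω : Type*} [Fintype ι] [Fintype κ] [MeasurableSpace Ω]
    {μ : Measure Ω} {f : ι → κ → Ω → ℝ} (hf : ∀ i j, Integrable (f i j) μ) :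
    ∑ i, ∑ j, ∫ ω, f i j ω ∂μ = ∫ ω, ∑ i, ∑ j, f i j ω ∂μ := by
  rw [integral_finsetSum _ fun i _ => integrable_finsetSum _ fun j _ => hf i j]
  exact Finset.sum_congr rfl fun i _ => (integral_finsetSum _ fun j _ => hf i j).symm

section ConjSandwichMean

variable {n : Type*} [Fintype n] [DecidableEq n] [MeasurableSpace (orthogonalGroup n ℝ)]
  [BorelSpace (orthogonalGroup n ℝ)] (μ : Measure (orthogonalGroup n ℝ)) (A C X : Matrix n n ℝ)

theorem integrable_conj_mul_mul_conj_apply [IsFiniteMeasure μ] (i j : n) :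
    Integrable (fun M : orthogonalGroup n ℝ =>
      (M.1 * A * M.1ᵀ * X * (M.1 * C * M.1ᵀ)) i j) μ := by
  refine Continuous.integrable_of_hasCompactSupport ?_ (.of_compactSpace _)
  fun_prop

/-- The linear map `X ↦ E[M A Mᵀ X M C Mᵀ]` for `M` distributed according to `μ`. The expectation is
taken entrywise, which avoids the choice of a norm on matrices. -/
noncomputable def conjSandwichMean [IsFiniteMeasure μ] : Matrix n n ℝ →ₗ[ℝ] Matrix n n ℝ where
  toFun X := of fun i j =>
    ∫ M : orthogonalGroup n ℝ, (M.1 * A * M.1ᵀ * X * (M.1 * C * M.1ᵀ)) i j ∂μ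
  map_add' X Y := by
    ext i j
    simp only [Matrix.mul_add, Matrix.add_mul, of_apply, Matrix.add_apply]
    exact integral_add (integrable_conj_mul_mul_conj_apply μ A C X i j)
      (integrable_conj_mul_mul_conj_apply μ A C Y i j)
  map_smul' c X := by
    ext i j
    simp only [Matrix.mul_smul, Matrix.smul_mul, of_apply, Matrix.smul_apply, RingHom.id_apply]
    exact integral_smul c _

theorem conjSandwichMean_apply [IsFiniteMeasure μ] (i j : n) :
    conjSandwichMean μ A C X i j =
      ∫ M : orthogonalGroup n ℝ, (M.1 * A * M.1ᵀ * X * (M.1 * C * M.1ᵀ)) i j ∂μ :=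
  rfl

theorem mul_conjSandwichMean_mul_apply [IsFiniteMeasure μ] {l m : Type*} (P : Matrix l n ℝ)
    (Q : Matrix n m ℝ) (i : l) (j : m) :
    (P * conjSandwichMean μ A C X * Q) i j =
      ∫ M : orthogonalGroup n ℝ, (P * (M.1 * A * M.1ᵀ * X * (M.1 * C * M.1ᵀ)) * Q) i j ∂μ := by
  have hexpand (Y : Matrix n n ℝ) : (P * Y * Q) i j = ∑ r, ∑ k, P i k * Q r j * Y k r := by
    simp only [mul_apply, Finset.sum_mul, mul_right_comm]
  simp only [hexpand, conjSandwichMean_apply, ← integral_const_mul]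
  exact sum_sum_integral_eq fun r k =>
    (integrable_conj_mul_mul_conj_apply μ A C X k r).const_mul _

theorem isOrthogonallyEquivariant_conjSandwichMean [IsFiniteMeasure μ] [μ.IsMulLeftInvariant] :
    IsOrthogonallyEquivariant (conjSandwichMean μ A C) := by
  intro R hR X
  have hcancel (Y : Matrix n n ℝ) : Rᵀ * (R * Y) = Y := by
    rw [← Matrix.mul_assoc, (mem_orthogonalGroup_iff' n ℝ).1 hR, Matrix.one_mul]
  ext i j
  rw [mul_conjSandwichMean_mul_apply, conjSandwichMean_apply,
    ← integral_mul_left_eq_self _ (⟨R, hR⟩ : orthogonalGroup n ℝ)]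
  simp only [Submonoid.coe_mul, transpose_mul, Matrix.mul_assoc, hcancel]

theorem sum_sum_conjSandwichMean_single_apply [IsProbabilityMeasure μ] :
    ∑ i, ∑ j, conjSandwichMean μ A C (single i j 1) i j = A.trace * C.trace := by
  have hconst (M : orthogonalGroup n ℝ) :
      ∑ i, ∑ j, (M.1 * A * M.1ᵀ) i i * (M.1 * C * M.1ᵀ) j j = A.trace * C.trace := by
    rw [← trace_conj_of_mem_orthogonalGroup M.2 A, ← trace_conj_of_mem_orthogonalGroup M.2 C]
    simp only [trace, diag_apply, Finset.sum_mul_sum]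
  simp only [conjSandwichMean_apply]
  rw [sum_sum_integral_eq fun i j => integrable_conj_mul_mul_conj_apply μ A C (single i j 1) i j]
  simp only [mul_single_one_mul_apply, hconst, integral_const, probReal_univ, one_smul]

theorem sum_sum_conjSandwichMean_single_apply_swap [IsProbabilityMeasure μ] :
    ∑ i, ∑ j, conjSandwichMean μ A C (single i j 1) j i = (A * Cᵀ).trace := by
  have hconst (M : orthogonalGroup n ℝ) :
      ∑ i, ∑ j, (M.1 * A * M.1ᵀ) j i * (M.1 * C * M.1ᵀ) j i = (A * Cᵀ).trace := by
    have htranspose : M.1 * Cᵀ * M.1ᵀ = (M.1 * C * M.1ᵀ)ᵀ := by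
      simp only [transpose_mul, transpose_transpose, Matrix.mul_assoc]
    rw [← trace_conj_of_mem_orthogonalGroup M.2, ← conj_mul_conj_of_mem_orthogonalGroup M.2,
      htranspose, Finset.sum_comm]
    exact sum_hadamard_eq _ _
  simp only [conjSandwichMean_apply]
  rw [sum_sum_integral_eq fun i j => integrable_conj_mul_mul_conj_apply μ A C (single i j 1) j i]
  simp only [mul_single_one_mul_apply, hconst, integral_const, probReal_univ, one_smul]

theorem trace_conjSandwichMean_one [IsProbabilityMeasure μ] :
    (conjSandwichMean μ A C 1).trace = (A * C).trace := by
  have hconst (M : orthogonalGroup n ℝ) :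
      ∑ i, (M.1 * A * M.1ᵀ * (1 : Matrix n n ℝ) * (M.1 * C * M.1ᵀ)) i i = (A * C).trace := by
    rw [Matrix.mul_one, conj_mul_conj_of_mem_orthogonalGroup M.2,
      ← trace_conj_of_mem_orthogonalGroup M.2 (A * C)]
    rfl
  simp only [trace, diag_apply, conjSandwichMean_apply]
  rw [← integral_finsetSum _ fun i _ => integrable_conj_mul_mul_conj_apply μ A C 1 i i]
  simp only [hconst, integral_const, probReal_univ, one_smul]
  rfl

end ConjSandwichMean

theorem orthogonal_haar_second_order_expectation_general {n : Type*} [Fintype n] [DecidableEq n]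
    [Nontrivial n] [MeasurableSpace (orthogonalGroup n ℝ)] [BorelSpace (orthogonalGroup n ℝ)]
    (A B C : Matrix n n ℝ) (μ : Measure (orthogonalGroup n ℝ)) [μ.IsMulLeftInvariant]
    [IsProbabilityMeasure μ] (i i' : n) :
    ∫ M : orthogonalGroup n ℝ, (M.1 * A * M.1ᵀ * B * M.1 * C * M.1ᵀ) i i' ∂μ =
      ((Fintype.card n : ℝ) + 1) / (Fintype.card n * (Fintype.card n - 1) * (Fintype.card n + 2)) *
          (A.trace * C.trace * B i i' + (A * C).trace * B.trace * (1 : Matrix n n ℝ) i i' +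
            (A * Cᵀ).trace * Bᵀ i i') -
        1 / (Fintype.card n * (Fintype.card n - 1) * (Fintype.card n + 2)) *
          ((A * C).trace * B i i' + A.trace * B.trace * C.trace * (1 : Matrix n n ℝ) i i' +
            (A * Cᵀ).trace * B i i' + (A * Cᵀ).trace * B.trace * (1 : Matrix n n ℝ) i i' +
            A.trace * C.trace * Bᵀ i i' + (A * C).trace * Bᵀ i i') := by
  have hmean : ∫ M : orthogonalGroup n ℝ, (M.1 * A * M.1ᵀ * B * M.1 * C * M.1ᵀ) i i' ∂μ =
      conjSandwichMean μ A C B i i' := by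
    simp only [conjSandwichMean_apply, Matrix.mul_assoc]
  have hform := congr_fun₂
    ((isOrthogonallyEquivariant_conjSandwichMean μ A C).smul_map_eq_of_contractions
      (sum_sum_conjSandwichMean_single_apply μ A C)
      (sum_sum_conjSandwichMean_single_apply_swap μ A C)
      (trace_conjSandwichMean_one μ A C) B) i i'
  simp only [Matrix.smul_apply, Matrix.add_apply, smul_eq_mul] at hform
  have hcard : (Fintype.card n : ℝ) - 1 ≠ 0 :=
    sub_ne_zero.2 (by exact_mod_cast (Fintype.one_lt_card (α := n)).ne')
  rw [hmean]
  field_simp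
  linear_combination hform

/-- For Haar-distributed `M` on `O(d)` with `d ≥ 2` and fixed matrices `A`, `B`, `C`,
`E[M A Mᵀ B M C Mᵀ]
= ((d+1)/(d(d−1)(d+2))) (tr A tr C · B + tr(AC) tr B · I + tr(ACᵀ) · Bᵀ)
− (1/(d(d−1)(d+2))) (tr(AC) · B + tr A tr B tr C · I + tr(ACᵀ) · B + tr(ACᵀ) tr B · I
+ tr A tr C · Bᵀ + tr(AC) · Bᵀ)`, entrywise. -/
theorem orthogonal_haar_second_order_expectation {d : ℕ} (hd : 2 ≤ d)
    (A B C : Matrix (Fin d) (Fin d) ℝ)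
    (μ : Measure (Matrix.orthogonalGroup (Fin d) ℝ)) [μ.IsHaarMeasure] [IsProbabilityMeasure μ]
    (i i' : Fin d) :
    ∫ M : Matrix.orthogonalGroup (Fin d) ℝ,
        ((M : Matrix (Fin d) (Fin d) ℝ) * A * (M : Matrix (Fin d) (Fin d) ℝ)ᵀ * B *
          (M : Matrix (Fin d) (Fin d) ℝ) * C * (M : Matrix (Fin d) (Fin d) ℝ)ᵀ) i i' ∂μ
      = (((d : ℝ) + 1) / ((d : ℝ) * ((d : ℝ) - 1) * ((d : ℝ) + 2))) *
          (A.trace * C.trace * B i i' +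
            (A * C).trace * B.trace * (1 : Matrix (Fin d) (Fin d) ℝ) i i' +
            (A * Cᵀ).trace * Bᵀ i i')
        - (1 / ((d : ℝ) * ((d : ℝ) - 1) * ((d : ℝ) + 2))) *
          ((A * C).trace * B i i' +
            A.trace * B.trace * C.trace * (1 : Matrix (Fin d) (Fin d) ℝ) i i' +
            (A * Cᵀ).trace * B i i' +
            (A * Cᵀ).trace * B.trace * (1 : Matrix (Fin d) (Fin d) ℝ) i i' +
            A.trace * C.trace * Bᵀ i i' +
            (A * C).trace * Bᵀ i i') := by
  have := Fin.nontrivial_iff_two_le.2 hd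
  simpa only [Fintype.card_fin] using
    orthogonal_haar_second_order_expectation_general A B C μ i i'
end
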